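/- Logarithmic Sobolev inequality in squared form: for every smooth compactly supported f on ℝⁿ, Ent_γ(f²) ≤ 2 ∫ |∇f|² dγ, where Ent_γ(g) = ∫ g log(g/∫g dγ) dγ. -/

import Mathlib

open MeasureTheory Real

noncomputable def gaussian (n : ℕ) : Measure (EuclideanSpace ℝ (Fin n)) :=
  (volume : Measure (EuclideanSpace ℝ (Fin n))).withDensity
    (fun x => ENNReal.ofReal ((2 * Real.pi) ^ (-(n : ℝ) / 2) * Real.exp (-‖x‖ ^ 2 / 2)))

noncomputable def OU (n : ℕ) (t : ℝ) (f : EuclideanSpace ℝ (Fin n) → ℝ)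
    (x : EuclideanSpace ℝ (Fin n)) : ℝ :=
  ∫ y, f (Real.exp (-t) • x + Real.sqrt (1 - Real.exp (-2 * t)) • y) ∂(gaussian n)

/-!
For a positive function `g` the averages `g_θ x = ∫ g (cos θ • x + sin θ • y) dγ(y)` interpolate
between `g` at `θ = 0` and the constant `∫ g dγ` at `θ = π / 2`. Since `γ ⊗ γ` is invariant under
rotations, Gaussian integration by parts gives, for `φ t = t log t`,
`d/dθ ∫ φ(g_θ) dγ = -sin θ cos θ ∫ φ''(g_θ) |(∇g)_θ|² dγ`. As `φ'' t = 1 / t`, the Cauchy–Schwarz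
inequality `|(∇g)_θ|² / g_θ ≤ (|∇g|² / g)_θ` bounds the last integral by the Fisher information
`∫ |∇g|² / g dγ`, whatever `θ`. Integrating over `[0, π / 2]`, where `∫ sin θ cos θ dθ = 1 / 2`,
yields `Ent(g) ≤ ½ ∫ |∇g|² / g dγ`. For `g = f² + ε` the right-hand side is at most `2 ∫ |∇f|² dγ`,
and `ε → 0`.
-/

open ProbabilityTheory Set Filter Module
open scoped Topology Gradient RealInnerProductSpace

section Entropy

variable {Ω : Type*} [MeasurableSpace Ω] {μ : Measure Ω}

/-- The entropy functional `Ent_μ(q) = ∫ q log (q / ∫ q dμ) dμ` of a nonnegative function `q`,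
relative to a measure `μ`. -/
noncomputable def entropy (μ : Measure Ω) (q : Ω → ℝ) : ℝ :=
  ∫ x, q x * log (q x / ∫ y, q y ∂μ) ∂μ

lemma entropy_eq_integral_mul_log_sub {q : Ω → ℝ} (hq₀ : ∀ x, 0 ≤ q x) (hq : Integrable q μ)
    (hq_log : Integrable (fun x => q x * log (q x)) μ) :
    entropy μ q = ∫ x, q x * log (q x) ∂μ - (∫ x, q x ∂μ) * log (∫ x, q x ∂μ) := by
  set m := ∫ x, q x ∂μ with hm
  rcases eq_or_ne m 0 with h0 | h0
  · have hae : ∀ᵐ x ∂μ, q x = 0 := (integral_eq_zero_iff_of_nonneg hq₀ hq).1 (hm ▸ h0)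
    have hlog : ∫ x, q x * log (q x) ∂μ = 0 :=
      integral_eq_zero_of_ae (hae.mono fun x hx => by simp [hx])
    simp [entropy, ← hm, h0, hlog]
  · have hsplit (x : Ω) : q x * log (q x / m) = q x * log (q x) - q x * log m := by
      rcases eq_or_ne (q x) 0 with hx | hx
      · simp [hx]
      · rw [log_div hx h0, mul_sub]
    simp only [entropy, ← hm, hsplit]
    rw [integral_sub hq_log (hq.mul_const _), integral_mul_const]

variable [IsFiniteMeasure μ]

lemma integrable_mul_log_of_mem_Icc {q : Ω → ℝ} {a b : ℝ} (hq : AEStronglyMeasurable q μ)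
    (hqab : ∀ x, q x ∈ Icc a b) : Integrable (fun x => q x * log (q x)) μ := by
  obtain ⟨C, hC⟩ := isCompact_Icc.exists_bound_of_continuousOn continuous_mul_log.continuousOn
  exact .of_bound (continuous_mul_log.comp_aestronglyMeasurable hq) C
    (.of_forall fun x => hC _ (hqab x))

lemma tendsto_integral_comp_add_const {φ : ℝ → ℝ} (hφ : Continuous φ) {q : Ω → ℝ} {a b : ℝ}
    (hq : AEStronglyMeasurable q μ) (hqab : ∀ x, q x ∈ Icc a b) :
    Tendsto (fun ε => ∫ x, φ (q x + ε) ∂μ) (𝓝 0) (𝓝 (∫ x, φ (q x) ∂μ)) := by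
  obtain ⟨C, hC⟩ := (isCompact_Icc (a := a - 1) (b := b + 1)).exists_bound_of_continuousOn
    hφ.continuousOn
  refine tendsto_integral_filter_of_dominated_convergence (fun _ => C)
    (.of_forall fun ε => hφ.comp_aestronglyMeasurable (hq.add_const ε)) ?_ (integrable_const C)
    (.of_forall fun x => ?_)
  · filter_upwards [Icc_mem_nhds (show (-1 : ℝ) < 0 by norm_num) one_pos] with ε hε
    exact .of_forall fun x =>
      hC _ ⟨by linarith [(hqab x).1, hε.1], by linarith [(hqab x).2, hε.2]⟩
  · have hx : Continuous fun ε => φ (q x + ε) := by fun_prop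
    simpa using hx.tendsto 0

lemma tendsto_entropy_add_const {q : Ω → ℝ} {M : ℝ} (hq : AEStronglyMeasurable q μ)
    (hqM : ∀ x, q x ∈ Icc 0 M) :
    Tendsto (fun ε => entropy μ fun x => q x + ε) (𝓝[>] 0) (𝓝 (entropy μ q)) := by
  have hint := tendsto_integral_comp_add_const continuous_id hq hqM
  have hlog := tendsto_integral_comp_add_const continuous_mul_log hq hqM
  have hlim := hlog.sub ((continuous_mul_log.tendsto _).comp hint)
  rw [entropy_eq_integral_mul_log_sub (fun x => (hqM x).1)
    (.of_mem_Icc 0 M hq.aemeasurable (.of_forall hqM))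
    (integrable_mul_log_of_mem_Icc hq hqM)]
  refine (hlim.mono_left nhdsWithin_le_nhds).congr' ?_
  filter_upwards [self_mem_nhdsWithin] with ε (hε : 0 < ε)
  have hq' : AEStronglyMeasurable (fun x => q x + ε) μ := hq.add_const ε
  have hqε (x : Ω) : q x + ε ∈ Icc 0 (M + ε) :=
    ⟨by linarith [(hqM x).1], by linarith [(hqM x).2]⟩
  exact (entropy_eq_integral_mul_log_sub (fun x => (hqε x).1)
    (.of_mem_Icc 0 (M + ε) hq'.aemeasurable (.of_forall hqε))
    (integrable_mul_log_of_mem_Icc hq' hqε)).symm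

end Entropy

section CauchySchwarz

variable {Ω F : Type*} [MeasurableSpace Ω] {μ : Measure Ω} [NormedAddCommGroup F] [NormedSpace ℝ F]

lemma norm_integral_sq_div_integral_le {V : Ω → F} {g : Ω → ℝ} (hg₀ : ∀ x, 0 < g x)
    (hg : Integrable g μ) (hV : Integrable V μ) (hVg : Integrable (fun x => ‖V x‖ ^ 2 / g x) μ) :
    ‖∫ x, V x ∂μ‖ ^ 2 / ∫ x, g x ∂μ ≤ ∫ x, ‖V x‖ ^ 2 / g x ∂μ := by
  set G := ∫ x, g x ∂μ with hG
  set A := ‖∫ x, V x ∂μ‖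
  have hpt (x : Ω) : 2 * (A / G) * ‖V x‖ ≤ (A / G) ^ 2 * g x + ‖V x‖ ^ 2 / g x := by
    have hx := hg₀ x
    have hsq : 0 ≤ (A / G * g x - ‖V x‖) ^ 2 / g x := by positivity
    have hexp : (A / G * g x - ‖V x‖) ^ 2 / g x
        = (A / G) ^ 2 * g x + ‖V x‖ ^ 2 / g x - 2 * (A / G) * ‖V x‖ := by
      field_simp
      ring
    linarith
  have hint := integral_mono (hV.norm.const_mul _) ((hg.const_mul _).add hVg) hpt
  simp only [Pi.add_apply] at hint
  rw [integral_add (hg.const_mul _) hVg, integral_const_mul, integral_const_mul, ← hG] at hint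
  have hG₀ : 0 ≤ G := integral_nonneg fun x => (hg₀ x).le
  have hA : A / G * A ≤ A / G * ∫ x, ‖V x‖ ∂μ := by
    gcongr
    exact norm_integral_le_integral_norm V
  have hAG : (A / G) ^ 2 * G = A / G * A := by
    rcases eq_or_ne G 0 with h0 | h0
    · simp [h0]
    · field_simp
  calc A ^ 2 / G = 2 * (A / G * A) - A / G * A := by ring
    _ ≤ _ := by linarith

end CauchySchwarz

section StdGaussian

variable {E : Type*} [NormedAddCommGroup E] [InnerProductSpace ℝ E]

/-- The density of the standard Gaussian measure on `E` with respect to Lebesgue measure. -/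
noncomputable def stdGaussianPDF (x : E) : ℝ :=
  (2 * π) ^ (-(finrank ℝ E : ℝ) / 2) * rexp (-‖x‖ ^ 2 / 2)

lemma stdGaussianPDF_nonneg (x : E) : 0 ≤ stdGaussianPDF x := by
  unfold stdGaussianPDF
  positivity

lemma measurable_stdGaussianPDF [MeasurableSpace E] [BorelSpace E] :
    Measurable (stdGaussianPDF : E → ℝ) := by
  unfold stdGaussianPDF
  fun_prop

variable [FiniteDimensional ℝ E]

lemma hasGradientAt_stdGaussianPDF (x : E) :
    HasGradientAt stdGaussianPDF (-stdGaussianPDF x • x) x := by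
  have h := (((hasStrictFDerivAt_norm_sq x).hasFDerivAt.const_mul (-(1 / 2 : ℝ))).exp).const_mul
    ((2 * π) ^ (-(finrank ℝ E : ℝ) / 2))
  rw [hasGradientAt_iff_hasFDerivAt]
  convert! h using 1
  · ext y
    simp only [stdGaussianPDF]
    ring_nf
  · ext y
    simp only [stdGaussianPDF, map_smul, smul_apply, InnerProductSpace.toDual_apply_apply,
      smul_eq_mul, coe_innerSL_apply, nsmul_eq_mul]
    push_cast
    ring_nf

variable [MeasurableSpace E] [BorelSpace E]

lemma integrable_stdGaussianPDF : Integrable (stdGaussianPDF : E → ℝ) := by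
  have hne : ∫ x : E, rexp (-(1 / 2) * ‖x‖ ^ 2) ≠ 0 := by
    rw [GaussianFourier.integral_rexp_neg_mul_sq_norm (by norm_num)]
    positivity
  refine ((Integrable.of_integral_ne_zero hne).const_mul
    ((2 * π) ^ (-(finrank ℝ E : ℝ) / 2))).congr (.of_forall fun x => ?_)
  simp only [stdGaussianPDF]
  ring_nf

lemma integral_withDensity_stdGaussianPDF {F : Type*} [NormedAddCommGroup F] [NormedSpace ℝ F]
    (φ : E → F) :
    ∫ x, φ x ∂(volume.withDensity fun x => ENNReal.ofReal (stdGaussianPDF x)) =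
      ∫ x, stdGaussianPDF x • φ x := by
  rw [integral_withDensity_eq_integral_toReal_smul
    measurable_stdGaussianPDF.ennreal_ofReal (by simp)]
  simp only [ENNReal.toReal_ofReal (stdGaussianPDF_nonneg _)]

lemma integral_stdGaussianPDF_smul_cexp (t : E) :
    ∫ x : E, stdGaussianPDF x • Complex.exp (⟪x, t⟫ * Complex.I) =
      Complex.exp (-(‖t‖ ^ 2 / 2)) := by
  set c : ℝ := (2 * π) ^ (-(finrank ℝ E : ℝ) / 2) with hc
  have hsquare (x : E) : stdGaussianPDF x • Complex.exp (⟪x, t⟫ * Complex.I) =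
      c * Complex.exp (-(1 / 2) * (‖x‖ : ℂ) ^ 2 + Complex.I * ⟪t, x⟫) := by
    rw [stdGaussianPDF, Complex.real_smul, Complex.ofReal_mul, Complex.ofReal_exp, mul_assoc,
      ← Complex.exp_add, real_inner_comm]
    congr 2
    push_cast
    ring
  have hnorm : (c : ℂ) * (π / (1 / 2) : ℂ) ^ (finrank ℝ E / 2 : ℂ) = 1 := by
    have hbase : (π / (1 / 2) : ℂ) = ((2 * π : ℝ) : ℂ) := by push_cast; ring
    have hexp : (finrank ℝ E / 2 : ℂ) = ((finrank ℝ E / 2 : ℝ) : ℂ) := by push_cast; rfl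
    rw [hbase, hexp, ← Complex.ofReal_cpow (by positivity), ← Complex.ofReal_mul, hc,
      ← rpow_add (by positivity), neg_div, neg_add_cancel, rpow_zero, Complex.ofReal_one]
  simp only [hsquare]
  rw [integral_const_mul, GaussianFourier.integral_cexp_neg_mul_sq_norm_add (by norm_num),
    ← mul_assoc, hnorm, one_mul, Complex.I_sq]
  ring_nf

lemma stdGaussian_eq_withDensity :
    stdGaussian E = volume.withDensity fun x => ENNReal.ofReal (stdGaussianPDF x) := by
  have : IsFiniteMeasure (volume.withDensity fun x : E => ENNReal.ofReal (stdGaussianPDF x)) :=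
    isFiniteMeasure_withDensity_ofReal integrable_stdGaussianPDF.2
  refine Measure.ext_of_charFun (funext fun t => ?_)
  rw [charFun_stdGaussian, charFun_apply, integral_withDensity_stdGaussianPDF,
    integral_stdGaussianPDF_smul_cexp, neg_div]

lemma gaussian_eq_stdGaussian (n : ℕ) :
    gaussian n = stdGaussian (EuclideanSpace ℝ (Fin n)) := by
  simp [stdGaussian_eq_withDensity, gaussian, stdGaussianPDF]

lemma integrable_stdGaussian_iff {F : Type*} [NormedAddCommGroup F] [NormedSpace ℝ F]
    {φ : E → F} :
    Integrable φ (stdGaussian E) ↔ Integrable fun x => stdGaussianPDF x • φ x := by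
  rw [stdGaussian_eq_withDensity, integrable_withDensity_iff_integrable_smul'
    measurable_stdGaussianPDF.ennreal_ofReal (by simp)]
  simp only [ENNReal.toReal_ofReal (stdGaussianPDF_nonneg _)]

lemma integrable_norm_stdGaussian : Integrable (fun x => ‖x‖) (stdGaussian E) :=
  IsGaussian.integrable_id.norm

lemma integral_inner_smul_stdGaussian {F : Type*} [NormedAddCommGroup F] [NormedSpace ℝ F]
    {f : E → F} {w : E} (hf : Differentiable ℝ f) (hf_int : Integrable f (stdGaussian E))
    (hf_inner : Integrable (fun x => ⟪x, w⟫ • f x) (stdGaussian E))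
    (hf_fderiv : Integrable (fun x => fderiv ℝ f x w) (stdGaussian E)) :
    ∫ x, ⟪x, w⟫ • f x ∂(stdGaussian E) = ∫ x, fderiv ℝ f x w ∂(stdGaussian E) := by
  rw [integrable_stdGaussian_iff] at hf_int hf_inner hf_fderiv
  have hpdf (x : E) : fderiv ℝ stdGaussianPDF x w • f x =
      -(stdGaussianPDF x • ⟪x, w⟫ • f x) := by
    simp [(hasGradientAt_stdGaussianPDF x).hasFDerivAt.fderiv, smul_smul]
  have hparts := integral_smul_fderiv_eq_neg_fderiv_smul_of_integrable
    (hf_inner.neg.congr (.of_forall fun x => (hpdf x).symm)) hf_fderiv hf_int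
    (fun x _ => (hasGradientAt_stdGaussianPDF x).differentiableAt) (fun x _ => hf x)
  simp only [hpdf, integral_neg, neg_neg] at hparts
  rw [stdGaussian_eq_withDensity, integral_withDensity_stdGaussianPDF,
    integral_withDensity_stdGaussianPDF, hparts]

lemma measurePreserving_rotation_stdGaussian (θ : ℝ) :
    MeasurePreserving (ContinuousLinearMap.rotation θ : E × E →L[ℝ] E × E)
      ((stdGaussian E).prod (stdGaussian E)) ((stdGaussian E).prod (stdGaussian E)) where
  measurable := by fun_prop
  map_eq := IsGaussian.map_rotation_eq_self integral_id_stdGaussian θ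

lemma integral_integral_rotation_stdGaussian {F : Type*} [NormedAddCommGroup F] [NormedSpace ℝ F]
    {G : E → E → F}
    (hG : Integrable (Function.uncurry G) ((stdGaussian E).prod (stdGaussian E))) (θ : ℝ) :
    ∫ x, ∫ y, G (cos θ • x + sin θ • y) (-sin θ • x + cos θ • y) ∂(stdGaussian E) ∂(stdGaussian E) =
      ∫ x, ∫ y, G x y ∂(stdGaussian E) ∂(stdGaussian E) := by
  have hrot := measurePreserving_rotation_stdGaussian (E := E) θ
  calc _ = ∫ p, (Function.uncurry G ∘ ContinuousLinearMap.rotation θ) p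
        ∂((stdGaussian E).prod (stdGaussian E)) :=
        (integral_prod _ (hrot.integrable_comp_of_integrable hG)).symm
    _ = ∫ p, Function.uncurry G p ∂((stdGaussian E).prod (stdGaussian E)) := by
        conv_rhs => rw [← hrot.map_eq]
        exact (integral_map hrot.aemeasurable (hrot.map_eq.symm ▸ hG.aestronglyMeasurable)).symm
    _ = _ := integral_prod _ hG

end StdGaussian

section Rotation

variable {E F : Type*} [NormedAddCommGroup E] [NormedSpace ℝ E] [NormedAddCommGroup F]
  [NormedSpace ℝ F] {f : E → F} {L : ℝ}

lemma cos_smul_sub_sin_smul_rotation (θ : ℝ) (x y : E) :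
    cos θ • (cos θ • x + sin θ • y) - sin θ • (-sin θ • x + cos θ • y) = x := by
  calc _ = (cos θ ^ 2 + sin θ ^ 2) • x := by module
    _ = x := by rw [cos_sq_add_sin_sq, one_smul]

lemma hasFDerivAt_comp_add_smul (hf : Differentiable ℝ f) (a : E)
    (c : ℝ) (x : E) :
    HasFDerivAt (fun y => f (a + c • y)) (c • fderiv ℝ f (a + c • x)) x := by
  have haffine : HasFDerivAt (fun y : E => a + c • y) (c • ContinuousLinearMap.id ℝ E) x :=
    ((hasFDerivAt_id x).const_smul c).const_add a
  simpa [Function.comp_def] using (hf (a + c • x)).hasFDerivAt.comp x haffine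

lemma norm_fderiv_rotation_le (hfL : ∀ x, ‖fderiv ℝ f x‖ ≤ L) (θ : ℝ) (z x y : E) :
    ‖fderiv ℝ f z (-sin θ • x + cos θ • y)‖ ≤ L * (‖x‖ + ‖y‖) := by
  have hrot : ‖-sin θ • x + cos θ • y‖ ≤ ‖x‖ + ‖y‖ := by
    refine norm_add_le_of_le ?_ ?_
    · rw [norm_smul, norm_neg]
      exact mul_le_of_le_one_left (norm_nonneg x) (abs_sin_le_one θ)
    · rw [norm_smul]
      exact mul_le_of_le_one_left (norm_nonneg y) (abs_cos_le_one θ)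
  exact (fderiv ℝ f z).le_of_opNorm_le_of_le (hfL z) hrot

end Rotation

section Gradient

variable {E : Type*} [NormedAddCommGroup E] [InnerProductSpace ℝ E] [CompleteSpace E]

lemma norm_gradient (f : E → ℝ) (x : E) : ‖∇ f x‖ = ‖fderiv ℝ f x‖ := by
  rw [← toDual_gradient, LinearIsometryEquiv.norm_map]

lemma continuous_gradient {f : E → ℝ} (hf : ContDiff ℝ 1 f) : Continuous (∇ f) :=
  (InnerProductSpace.toDual ℝ E).symm.continuous.comp (hf.continuous_fderiv one_ne_zero)

lemma gradient_comp {φ : ℝ → ℝ} {f : E → ℝ} {x : E} (hφ : DifferentiableAt ℝ φ (f x))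
    (hf : DifferentiableAt ℝ f x) :
    ∇ (fun y => φ (f y)) x = deriv φ (f x) • ∇ f x := by
  have hcomp : HasFDerivAt (fun y => φ (f y)) (deriv φ (f x) • fderiv ℝ f x) x :=
    hφ.hasDerivAt.comp_hasFDerivAt x hf.hasFDerivAt
  rw [gradient, gradient, hcomp.fderiv, map_smul]

lemma gradient_sq_add_const {f : E → ℝ} (hf : Differentiable ℝ f) (c : ℝ) (x : E) :
    ∇ (fun y => f y ^ 2 + c) x = (2 * f x) • ∇ f x := by
  have hφ : HasDerivAt (fun t : ℝ => t ^ 2 + c) (2 * f x) (f x) := by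
    simpa using (hasDerivAt_pow 2 (f x)).add_const c
  rw [gradient_comp hφ.differentiableAt (hf x), hφ.deriv]

end Gradient

section AffineArgument

variable {E F : Type*} [NormedAddCommGroup E] [InnerProductSpace ℝ E] [FiniteDimensional ℝ E]
  [MeasurableSpace E] [BorelSpace E] [NormedAddCommGroup F] {f : E → F} {C L : ℝ}

lemma integrable_comp_add_smul_stdGaussian (hf : Continuous f) (hfC : ∀ x, ‖f x‖ ≤ C) (a : E)
    (c : ℝ) : Integrable (fun y => f (a + c • y)) (stdGaussian E) :=
  .of_bound (Continuous.aestronglyMeasurable (by fun_prop)) C (.of_forall fun _ => hfC _)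

variable [NormedSpace ℝ F]

lemma integral_inner_smul_comp_add_smul_stdGaussian (hf : ContDiff ℝ 1 f)
    (hfC : ∀ x, ‖f x‖ ≤ C) (hfL : ∀ x, ‖fderiv ℝ f x‖ ≤ L) (a w : E) (c : ℝ) :
    ∫ y, ⟪y, w⟫ • f (a + c • y) ∂(stdGaussian E) =
      c • ∫ y, fderiv ℝ f (a + c • y) w ∂(stdGaussian E) := by
  have hfderiv (y : E) := hasFDerivAt_comp_add_smul (hf.differentiable one_ne_zero) a c y
  have hcont := hf.continuous
  have hcont' := hf.continuous_fderiv one_ne_zero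
  have hint_inner : Integrable (fun y => ⟪y, w⟫ • f (a + c • y)) (stdGaussian E) := by
    refine (integrable_norm_stdGaussian.mul_const (‖w‖ * C)).mono'
      (Continuous.aestronglyMeasurable (by fun_prop)) (.of_forall fun y => ?_)
    rw [norm_smul, ← mul_assoc]
    gcongr
    exacts [norm_inner_le_norm y w, hfC _]
  have hint_fderiv : Integrable (fun y => fderiv ℝ f (a + c • y) w) (stdGaussian E) :=
    integrable_comp_add_smul_stdGaussian (hcont'.clm_apply continuous_const)
      (fun x => (fderiv ℝ f x).le_of_opNorm_le (hfL x) w) a c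
  rw [integral_inner_smul_stdGaussian (fun y => (hfderiv y).differentiableAt)
    (integrable_comp_add_smul_stdGaussian hcont hfC a c) hint_inner, ← integral_smul]
  · simp only [(hfderiv _).fderiv, smul_apply]
  · simpa only [(hfderiv _).fderiv, smul_apply] using! hint_fderiv.smul c

end AffineArgument

section Mehler

variable {E F : Type*} [NormedAddCommGroup E] [InnerProductSpace ℝ E] [FiniteDimensional ℝ E]
  [MeasurableSpace E] [NormedAddCommGroup F] [NormedSpace ℝ F]

/-- The Ornstein–Uhlenbeck semigroup, written through Mehler's formula as an average over rotations
by the angle `θ`; the time `t` of the semigroup is given by `cos θ = exp (-t)`. -/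
noncomputable def mehler (θ : ℝ) (f : E → F) (x : E) : F :=
  ∫ y, f (cos θ • x + sin θ • y) ∂(stdGaussian E)

lemma mehler_pi_div_two (f : E → F) (x : E) :
    mehler (π / 2) f x = ∫ y, f y ∂(stdGaussian E) := by
  simp [mehler]

variable [BorelSpace E] {f : E → F} {C L : ℝ}

lemma mehler_zero [CompleteSpace F] (f : E → F) : mehler 0 f = f := by
  ext x
  simp [mehler]

lemma norm_mehler_le (hfC : ∀ x, ‖f x‖ ≤ C) (θ : ℝ) (x : E) : ‖mehler θ f x‖ ≤ C := by
  simpa [mehler] using norm_integral_le_of_norm_le_const (μ := stdGaussian E)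
    (.of_forall fun y => hfC (cos θ • x + sin θ • y))

lemma mehler_mem [CompleteSpace F] {K : Set F} (hK : IsCompact K) (hKc : Convex ℝ K)
    (hf : Continuous f) (hfK : ∀ x, f x ∈ K) (θ : ℝ) (x : E) : mehler θ f x ∈ K := by
  obtain ⟨C, hC⟩ := hK.isBounded.exists_norm_le
  exact hKc.integral_mem hK.isClosed (.of_forall fun _ => hfK _)
    (integrable_comp_add_smul_stdGaussian hf (fun x => hC _ (hfK x)) _ _)

lemma continuous_mehler (hf : Continuous f) (hfC : ∀ x, ‖f x‖ ≤ C) (θ : ℝ) :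
    Continuous (mehler θ f) :=
  continuous_of_dominated (bound := fun _ => C)
    (fun _ => Continuous.aestronglyMeasurable (by fun_prop))
    (fun _ => .of_forall fun _ => hfC _) (integrable_const _) (.of_forall fun _ => by fun_prop)

lemma integral_mehler [CompleteSpace F] (hf : Integrable f (stdGaussian E)) (θ : ℝ) :
    ∫ x, mehler θ f x ∂(stdGaussian E) = ∫ x, f x ∂(stdGaussian E) := by
  simpa [mehler] using integral_integral_rotation_stdGaussian (G := fun x _ => f x)
    (hf.comp_fst (stdGaussian E)) θ

lemma hasFDerivAt_mehler (hf : ContDiff ℝ 1 f) (hfC : ∀ x, ‖f x‖ ≤ C)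
    (hfL : ∀ x, ‖fderiv ℝ f x‖ ≤ L) (θ : ℝ) (x : E) :
    HasFDerivAt (mehler θ f) (cos θ • mehler θ (fderiv ℝ f) x) x := by
  have hcont := hf.continuous
  have := hf.continuous_fderiv one_ne_zero
  rw [mehler, ← integral_smul]
  refine hasFDerivAt_integral_of_dominated_of_fderiv_le (𝕜 := ℝ)
    (F := fun x y => f (cos θ • x + sin θ • y))
    (F' := fun x y => cos θ • fderiv ℝ f (cos θ • x + sin θ • y)) (bound := fun _ => L)
    Filter.univ_mem (.of_forall fun _ => Continuous.aestronglyMeasurable (by fun_prop))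
    (integrable_comp_add_smul_stdGaussian hcont hfC _ _)
    (Continuous.aestronglyMeasurable (by fun_prop))
    (.of_forall fun y z _ => ?_) (integrable_const _) (.of_forall fun y z _ => ?_)
  · rw [norm_smul]
    exact (mul_le_of_le_one_left (norm_nonneg _) (abs_cos_le_one θ)).trans (hfL _)
  · simpa only [add_comm] using
      hasFDerivAt_comp_add_smul (hf.differentiable one_ne_zero) (sin θ • y) (cos θ) z

lemma contDiff_mehler (hf : ContDiff ℝ 1 f) (hfC : ∀ x, ‖f x‖ ≤ C)
    (hfL : ∀ x, ‖fderiv ℝ f x‖ ≤ L) (θ : ℝ) : ContDiff ℝ 1 (mehler θ f) :=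
  contDiff_one_iff_hasFDerivAt.2 ⟨fun x => cos θ • mehler θ (fderiv ℝ f) x,
    (continuous_mehler (hf.continuous_fderiv one_ne_zero) hfL θ).const_smul (cos θ),
    hasFDerivAt_mehler hf hfC hfL θ⟩

lemma norm_fderiv_mehler_le (hf : ContDiff ℝ 1 f) (hfC : ∀ x, ‖f x‖ ≤ C)
    (hfL : ∀ x, ‖fderiv ℝ f x‖ ≤ L) (θ : ℝ) (x : E) : ‖fderiv ℝ (mehler θ f) x‖ ≤ L := by
  rw [(hasFDerivAt_mehler hf hfC hfL θ x).fderiv, norm_smul]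
  exact (mul_le_of_le_one_left (norm_nonneg _) (abs_cos_le_one θ)).trans (norm_mehler_le hfL θ x)

lemma gradient_mehler {g : E → ℝ} (hg : ContDiff ℝ 1 g) (hgC : ∀ x, ‖g x‖ ≤ C)
    (hgL : ∀ x, ‖fderiv ℝ g x‖ ≤ L) (θ : ℝ) (x : E) :
    ∇ (mehler θ g) x = cos θ • mehler θ (∇ g) x := by
  have hint := integrable_comp_add_smul_stdGaussian (continuous_gradient hg)
    (fun x => (norm_gradient g x).trans_le (hgL x)) (cos θ • x) (sin θ)
  have hint' := integrable_comp_add_smul_stdGaussian (hg.continuous_fderiv one_ne_zero) hgL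
    (cos θ • x) (sin θ)
  refine ext_inner_right ℝ fun v => ?_
  simp only [inner_gradient_left, (hasFDerivAt_mehler hg hgC hgL θ x).fderiv, mehler,
    real_inner_smul_left, smul_apply, smul_eq_mul]
  rw [ContinuousLinearMap.integral_apply hint', real_inner_comm, ← integral_inner hint]
  simp only [inner_gradient_right, conj_trivial]

lemma hasDerivAt_mehler (hf : ContDiff ℝ 1 f) (hfC : ∀ x, ‖f x‖ ≤ C)
    (hfL : ∀ x, ‖fderiv ℝ f x‖ ≤ L) (θ : ℝ) (x : E) :
    HasDerivAt (fun t => mehler t f x)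
      (∫ y, fderiv ℝ f (cos θ • x + sin θ • y) (-sin θ • x + cos θ • y) ∂(stdGaussian E)) θ := by
  have hcont := hf.continuous
  have := hf.continuous_fderiv one_ne_zero
  refine (hasDerivAt_integral_of_dominated_loc_of_deriv_le
    (F := fun t y => f (cos t • x + sin t • y))
    (F' := fun t y => fderiv ℝ f (cos t • x + sin t • y) (-sin t • x + cos t • y))
    (bound := fun y => L * (‖x‖ + ‖y‖))
    Filter.univ_mem (.of_forall fun _ => Continuous.aestronglyMeasurable (by fun_prop))
    (integrable_comp_add_smul_stdGaussian hcont hfC _ _)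
    (Continuous.aestronglyMeasurable (by fun_prop))
    (.of_forall fun y t _ => norm_fderiv_rotation_le hfL t _ x y)
    (((integrable_const _).add integrable_norm_stdGaussian).const_mul L)
    (.of_forall fun y t _ => ?_)).2
  have hrot : HasDerivAt (fun t => cos t • x + sin t • y) (-sin t • x + cos t • y) t :=
    ((hasDerivAt_cos t).smul_const x).add ((hasDerivAt_sin t).smul_const y)
  exact (hf.differentiable one_ne_zero _).hasFDerivAt.comp_hasDerivAt t hrot

lemma norm_deriv_mehler_le (hf : ContDiff ℝ 1 f) (hfC : ∀ x, ‖f x‖ ≤ C)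
    (hfL : ∀ x, ‖fderiv ℝ f x‖ ≤ L) (θ : ℝ) (x : E) :
    ‖deriv (fun t => mehler t f x) θ‖ ≤ L * (‖x‖ + ∫ y, ‖y‖ ∂(stdGaussian E)) := by
  have hint : Integrable (fun y : E => ‖x‖ + ‖y‖) (stdGaussian E) :=
    (integrable_const _).add integrable_norm_stdGaussian
  rw [(hasDerivAt_mehler hf hfC hfL θ x).deriv]
  refine (norm_integral_le_of_norm_le (hint.const_mul L)
    (.of_forall fun y => norm_fderiv_rotation_le hfL θ _ x y)).trans_eq ?_
  rw [integral_const_mul, integral_add (integrable_const _) integrable_norm_stdGaussian]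
  simp

lemma stronglyMeasurable_deriv_mehler (hf : ContDiff ℝ 1 f) (hfC : ∀ x, ‖f x‖ ≤ C)
    (hfL : ∀ x, ‖fderiv ℝ f x‖ ≤ L) (θ : ℝ) :
    StronglyMeasurable fun x => deriv (fun t => mehler t f x) θ := by
  have := hf.continuous_fderiv one_ne_zero
  simp only [(hasDerivAt_mehler hf hfC hfL θ _).deriv]
  exact StronglyMeasurable.integral_prod_right' (f := fun p : E × E =>
    fderiv ℝ f (cos θ • p.1 + sin θ • p.2) (-sin θ • p.1 + cos θ • p.2))
    (Continuous.stronglyMeasurable (by fun_prop))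

end Mehler

section DirichletForm

variable {E : Type*} [NormedAddCommGroup E] [InnerProductSpace ℝ E] [FiniteDimensional ℝ E]
  [MeasurableSpace E] [BorelSpace E] {A B C L : ℝ}

lemma integrable_inner_mul_stdGaussian_prod {V : E → E} {Ψ : E × E → ℝ} (hV : Continuous V)
    (hVL : ∀ x, ‖V x‖ ≤ L) (hΨ : Continuous Ψ) (hΨA : ∀ p, ‖Ψ p‖ ≤ A) :
    Integrable (fun p => ⟪p.2, V p.1⟫ * Ψ p) ((stdGaussian E).prod (stdGaussian E)) := by
  refine ((integrable_norm_stdGaussian.comp_snd _).mul_const (L * A)).mono'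
    (Continuous.aestronglyMeasurable (by fun_prop)) (.of_forall fun p => ?_)
  have hinner : ‖⟪p.2, V p.1⟫‖ ≤ ‖p.2‖ * L :=
    (norm_inner_le_norm _ _).trans (mul_le_mul_of_nonneg_left (hVL _) (norm_nonneg _))
  rw [← mul_assoc]
  exact norm_mul_le_of_le hinner (hΨA p)

lemma integral_mul_deriv_mehler {ψ g : E → ℝ} (hψ : ContDiff ℝ 1 ψ) (hψA : ∀ x, ‖ψ x‖ ≤ A)
    (hψB : ∀ x, ‖fderiv ℝ ψ x‖ ≤ B) (hg : ContDiff ℝ 1 g) (hgC : ∀ x, ‖g x‖ ≤ C)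
    (hgL : ∀ x, ‖fderiv ℝ g x‖ ≤ L) (θ : ℝ) :
    ∫ x, ψ x * deriv (fun t => mehler t g x) θ ∂(stdGaussian E) =
      -sin θ * ∫ x, ⟪∇ ψ x, mehler θ (∇ g) x⟫ ∂(stdGaussian E) := by
  have hψ_cont := hψ.continuous
  have := hψ.continuous_fderiv one_ne_zero
  have hg_cont' := continuous_gradient hg
  have hgL' (x : E) : ‖∇ g x‖ ≤ L := (norm_gradient g x).trans_le (hgL x)
  -- In the rotated variables `u = cos θ • x + sin θ • y`, `v = -sin θ • x + cos θ • y` the gradient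
  -- of `g` is evaluated at `u` only, so the factor `v` can be integrated by parts.
  let P (u v : E) : ℝ := ⟪v, ∇ g u⟫ * ψ (cos θ • u - sin θ • v)
  let Q (u v : E) : ℝ := fderiv ℝ ψ (cos θ • u - sin θ • v) (∇ g u)
  have hP : Integrable (Function.uncurry P) ((stdGaussian E).prod (stdGaussian E)) :=
    integrable_inner_mul_stdGaussian_prod hg_cont' hgL' (by fun_prop) fun _ => hψA _
  have hQ : Integrable (Function.uncurry Q) ((stdGaussian E).prod (stdGaussian E)) :=
    .of_bound (Continuous.aestronglyMeasurable (by fun_prop)) (B * L)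
      (.of_forall fun p => (fderiv ℝ ψ _).le_of_opNorm_le_of_le (hψB _) (hgL' _))
  have hparts (u : E) : ∫ v, P u v ∂(stdGaussian E) = -sin θ * ∫ v, Q u v ∂(stdGaussian E) := by
    simpa only [P, Q, sub_eq_add_neg, neg_smul, smul_eq_mul] using
      integral_inner_smul_comp_add_smul_stdGaussian hψ hψA hψB (cos θ • u) (∇ g u) (-sin θ)
  calc _ = ∫ x, ∫ y, P (cos θ • x + sin θ • y) (-sin θ • x + cos θ • y) ∂(stdGaussian E)
        ∂(stdGaussian E) := by
        simp only [P, cos_smul_sub_sin_smul_rotation, integral_const_mul, inner_gradient_right,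
          conj_trivial, (hasDerivAt_mehler hg hgC hgL θ _).deriv, mul_comm]
    _ = ∫ u, ∫ v, P u v ∂(stdGaussian E) ∂(stdGaussian E) :=
        integral_integral_rotation_stdGaussian hP θ
    _ = -sin θ * ∫ u, ∫ v, Q u v ∂(stdGaussian E) ∂(stdGaussian E) := by
        simp only [hparts, integral_const_mul]
    _ = -sin θ * ∫ x, ∫ y, Q (cos θ • x + sin θ • y) (-sin θ • x + cos θ • y) ∂(stdGaussian E)
        ∂(stdGaussian E) := by
        rw [integral_integral_rotation_stdGaussian hQ θ]
    _ = _ := by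
        simp only [Q, cos_smul_sub_sin_smul_rotation, mehler, inner_gradient_left,
          ContinuousLinearMap.integral_comp_comm _
            (integrable_comp_add_smul_stdGaussian hg_cont' hgL' _ _)]

end DirichletForm

section EntropyFlow

variable {E : Type*} [NormedAddCommGroup E] [InnerProductSpace ℝ E] [FiniteDimensional ℝ E]
  [MeasurableSpace E] [BorelSpace E] {φ : ℝ → ℝ} {K s : Set ℝ} {g : E → ℝ} {L : ℝ}

lemma hasDerivAt_integral_comp_mehler (hs : IsOpen s) (hφ : ContDiffOn ℝ 1 φ s) (hK : IsCompact K)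
    (hKc : Convex ℝ K) (hKs : K ⊆ s) (hg : ContDiff ℝ 1 g) (hgK : ∀ x, g x ∈ K)
    (hgL : ∀ x, ‖fderiv ℝ g x‖ ≤ L) (θ : ℝ) :
    HasDerivAt (fun t => ∫ x, φ (mehler t g x) ∂(stdGaussian E))
      (∫ x, deriv φ (mehler θ g x) * deriv (fun t => mehler t g x) θ ∂(stdGaussian E)) θ := by
  obtain ⟨C, hC⟩ := hK.isBounded.exists_norm_le
  have hgC (x : E) : ‖g x‖ ≤ C := hC _ (hgK x)
  have hmem (t : ℝ) (x : E) : mehler t g x ∈ K := mehler_mem hK hKc hg.continuous hgK t x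
  have hφ' : ContinuousOn (deriv φ) s := hφ.continuousOn_deriv_of_isOpen hs le_rfl
  obtain ⟨A, hA⟩ := hK.exists_bound_of_continuousOn (hφ.continuousOn.mono hKs)
  obtain ⟨B, hB⟩ := hK.exists_bound_of_continuousOn (hφ'.mono hKs)
  have hcomp {χ : ℝ → ℝ} (hχ : ContinuousOn χ s) (t : ℝ) : Continuous fun x => χ (mehler t g x) :=
    hχ.comp_continuous (continuous_mehler hg.continuous hgC t) fun x => hKs (hmem t x)
  refine (hasDerivAt_integral_of_dominated_loc_of_deriv_le
    (F := fun t x => φ (mehler t g x))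
    (F' := fun t x => deriv φ (mehler t g x) * deriv (fun t => mehler t g x) t)
    (bound := fun x => B * (L * (‖x‖ + ∫ y, ‖y‖ ∂(stdGaussian E))))
    Filter.univ_mem (.of_forall fun t => (hcomp hφ.continuousOn t).aestronglyMeasurable)
    (.of_bound (hcomp hφ.continuousOn θ).aestronglyMeasurable A
      (.of_forall fun x => hA _ (hmem θ x)))
    ((hcomp hφ' θ).aestronglyMeasurable.mul
      (stronglyMeasurable_deriv_mehler hg hgC hgL θ).aestronglyMeasurable)
    (.of_forall fun x t _ => ?_)
    (((integrable_norm_stdGaussian.add (integrable_const _)).const_mul L).const_mul B)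
    (.of_forall fun x t _ => ?_)).2
  · exact norm_mul_le_of_le (hB _ (hmem t x)) (norm_deriv_mehler_le hg hgC hgL t x)
  · have hφx := (hφ.differentiableOn one_ne_zero).differentiableAt (hs.mem_nhds (hKs (hmem t x)))
    exact hφx.hasDerivAt.comp t (hasDerivAt_mehler hg hgC hgL t x).differentiableAt.hasDerivAt

lemma integral_deriv_comp_mehler_mul_deriv (hs : IsOpen s) (hφ : ContDiffOn ℝ 2 φ s)
    (hK : IsCompact K) (hKc : Convex ℝ K) (hKs : K ⊆ s) (hg : ContDiff ℝ 1 g)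
    (hgK : ∀ x, g x ∈ K) (hgL : ∀ x, ‖fderiv ℝ g x‖ ≤ L) (θ : ℝ) :
    ∫ x, deriv φ (mehler θ g x) * deriv (fun t => mehler t g x) θ ∂(stdGaussian E) =
      -(sin θ * cos θ) *
        ∫ x, deriv^[2] φ (mehler θ g x) * ‖mehler θ (∇ g) x‖ ^ 2 ∂(stdGaussian E) := by
  obtain ⟨C, hC⟩ := hK.isBounded.exists_norm_le
  have hgC (x : E) : ‖g x‖ ≤ C := hC _ (hgK x)
  have hmem (x : E) : mehler θ g x ∈ K := mehler_mem hK hKc hg.continuous hgK θ x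
  have hφ' : ContDiffOn ℝ 1 (deriv φ) s := hφ.deriv_of_isOpen hs (by norm_num)
  obtain ⟨A, hA⟩ := hK.exists_bound_of_continuousOn (hφ'.continuousOn.mono hKs)
  obtain ⟨B, hB⟩ := hK.exists_bound_of_continuousOn
    ((hφ'.continuousOn_deriv_of_isOpen hs le_rfl).mono hKs)
  have hψ : ContDiff ℝ 1 (fun x => deriv φ (mehler θ g x)) :=
    hφ'.comp_contDiff (contDiff_mehler hg hgC hgL θ) fun x => hKs (hmem x)
  have hgrad (x : E) : ∇ (fun x => deriv φ (mehler θ g x)) x =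
      deriv^[2] φ (mehler θ g x) • ∇ (mehler θ g) x :=
    gradient_comp
      ((hφ'.differentiableOn one_ne_zero).differentiableAt (hs.mem_nhds (hKs (hmem x))))
      (hasFDerivAt_mehler hg hgC hgL θ x).differentiableAt
  have hψ_bdd (x : E) : ‖fderiv ℝ (fun x => deriv φ (mehler θ g x)) x‖ ≤ B * L := by
    rw [← norm_gradient, hgrad, norm_smul, norm_gradient]
    exact mul_le_mul (hB _ (hmem x)) (norm_fderiv_mehler_le hg hgC hgL θ x) (norm_nonneg _)
      ((norm_nonneg _).trans (hB _ (hmem x)))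
  have hinner (x : E) : ⟪∇ (fun x => deriv φ (mehler θ g x)) x, mehler θ (∇ g) x⟫ =
      cos θ * (deriv^[2] φ (mehler θ g x) * ‖mehler θ (∇ g) x‖ ^ 2) := by
    rw [hgrad, gradient_mehler hg hgC hgL, real_inner_smul_left, real_inner_smul_left,
      real_inner_self_eq_norm_sq, mul_left_comm]
  rw [integral_mul_deriv_mehler hψ (fun x => hA _ (hmem x)) hψ_bdd hg hgC hgL]
  simp only [hinner, integral_const_mul]
  ring

lemma integral_comp_sub_comp_integral_le {I : ℝ} (hs : IsOpen s) (hφ : ContDiffOn ℝ 2 φ s)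
    (hK : IsCompact K) (hKc : Convex ℝ K) (hKs : K ⊆ s) (hg : ContDiff ℝ 1 g)
    (hgK : ∀ x, g x ∈ K) (hgL : ∀ x, ‖fderiv ℝ g x‖ ≤ L)
    (hI : ∀ θ, ∫ x, deriv^[2] φ (mehler θ g x) * ‖mehler θ (∇ g) x‖ ^ 2 ∂(stdGaussian E) ≤ I) :
    ∫ x, φ (g x) ∂(stdGaussian E) - φ (∫ x, g x ∂(stdGaussian E)) ≤ I / 2 := by
  let Φ (θ : ℝ) : ℝ := ∫ x, φ (mehler θ g x) ∂(stdGaussian E) + I / 2 * sin θ ^ 2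
  have hΦ (θ : ℝ) : HasDerivAt Φ (sin θ * cos θ *
      (I - ∫ x, deriv^[2] φ (mehler θ g x) * ‖mehler θ (∇ g) x‖ ^ 2 ∂(stdGaussian E))) θ := by
    have hflow := hasDerivAt_integral_comp_mehler hs (hφ.of_le one_le_two) hK hKc hKs hg hgK hgL θ
    rw [integral_deriv_comp_mehler_mul_deriv hs hφ hK hKc hKs hg hgK hgL] at hflow
    convert! hflow.add (((hasDerivAt_sin θ).pow 2).const_mul (I / 2)) using 1
    simp only [Nat.cast_ofNat, Nat.add_one_sub_one, pow_one]
    ring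
  have hmono : MonotoneOn Φ (Icc 0 (π / 2)) := by
    refine monotoneOn_of_hasDerivWithinAt_nonneg (convex_Icc _ _)
      (fun θ _ => (hΦ θ).continuousAt.continuousWithinAt)
      (fun θ _ => (hΦ θ).hasDerivWithinAt) fun θ hθ => ?_
    obtain ⟨h₀, h₁⟩ := interior_subset hθ
    have hsin : 0 ≤ sin θ := sin_nonneg_of_nonneg_of_le_pi h₀ (by linarith [pi_pos])
    have hcos : 0 ≤ cos θ := cos_nonneg_of_mem_Icc ⟨by linarith [pi_pos], h₁⟩
    exact mul_nonneg (mul_nonneg hsin hcos) (sub_nonneg.2 (hI θ))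
  have hends : Φ 0 ≤ Φ (π / 2) :=
    hmono (left_mem_Icc.2 (by positivity)) (right_mem_Icc.2 (by positivity)) (by positivity)
  simp only [Φ, mehler_zero, mehler_pi_div_two, integral_const, probReal_univ, one_smul, sin_zero,
    sin_pi_div_two] at hends
  linarith

end EntropyFlow

section LogSobolev

variable {E : Type*} [NormedAddCommGroup E] [InnerProductSpace ℝ E] [FiniteDimensional ℝ E]
  [MeasurableSpace E] [BorelSpace E]

lemma norm_mehler_sq_div_mehler_le {F : Type*} [NormedAddCommGroup F] [NormedSpace ℝ F]
    {V : E → F} {g : E → ℝ} {C L M : ℝ}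
    (hV : Continuous V) (hVL : ∀ x, ‖V x‖ ≤ L) (hg : Continuous g) (hg₀ : ∀ x, 0 < g x)
    (hgM : ∀ x, ‖g x‖ ≤ M) (hVg : ∀ x, ‖‖V x‖ ^ 2 / g x‖ ≤ C) (θ : ℝ) (x : E) :
    ‖mehler θ V x‖ ^ 2 / mehler θ g x ≤ mehler θ (fun y => ‖V y‖ ^ 2 / g y) x :=
  norm_integral_sq_div_integral_le (fun _ => hg₀ _)
    (integrable_comp_add_smul_stdGaussian hg hgM _ _)
    (integrable_comp_add_smul_stdGaussian hV hVL _ _)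
    (integrable_comp_add_smul_stdGaussian ((hV.norm.pow 2).div hg fun x => (hg₀ x).ne') hVg _ _)

lemma integral_norm_mehler_sq_div_mehler_le {F : Type*} [NormedAddCommGroup F] [NormedSpace ℝ F]
    {V : E → F} {g : E → ℝ} {ε L M : ℝ} (hε : 0 < ε) (hV : Continuous V) (hVL : ∀ x, ‖V x‖ ≤ L)
    (hg : Continuous g) (hgεM : ∀ x, g x ∈ Icc ε M) (θ : ℝ) :
    ∫ x, ‖mehler θ V x‖ ^ 2 / mehler θ g x ∂(stdGaussian E) ≤
      ∫ x, ‖V x‖ ^ 2 / g x ∂(stdGaussian E) := by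
  have hg₀ (x : E) : 0 < g x := hε.trans_le (hgεM x).1
  have hcont : Continuous fun x => ‖V x‖ ^ 2 / g x := (hV.norm.pow 2).div hg fun x => (hg₀ x).ne'
  have hbdd (x : E) : ‖‖V x‖ ^ 2 / g x‖ ≤ L ^ 2 / ε := by
    have := hg₀ x
    rw [norm_of_nonneg (by positivity)]
    gcongr
    exacts [hVL x, (hgεM x).1]
  have hgM (x : E) : ‖g x‖ ≤ M := (norm_of_nonneg (hg₀ x).le).trans_le (hgεM x).2
  rw [← integral_mehler (.of_bound hcont.aestronglyMeasurable _ (.of_forall hbdd)) θ]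
  refine integral_mono_of_nonneg (.of_forall fun x => ?_)
    (.of_bound (continuous_mehler hcont hbdd θ).aestronglyMeasurable _
      (.of_forall fun x => norm_mehler_le hbdd θ x))
    (.of_forall fun x => norm_mehler_sq_div_mehler_le hV hVL hg hg₀ hgM hbdd θ x)
  exact div_nonneg (by positivity) (integral_nonneg fun y => (hg₀ _).le)

lemma entropy_stdGaussian_le_of_mem_Icc {g : E → ℝ} {ε M L : ℝ} (hg : ContDiff ℝ 1 g) (hε : 0 < ε)
    (hgεM : ∀ x, g x ∈ Icc ε M) (hgL : ∀ x, ‖fderiv ℝ g x‖ ≤ L) :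
    entropy (stdGaussian E) g ≤ (∫ x, ‖∇ g x‖ ^ 2 / g x ∂(stdGaussian E)) / 2 := by
  have hmeas : AEStronglyMeasurable g (stdGaussian E) := hg.continuous.aestronglyMeasurable
  have hφ : ContDiffOn ℝ 2 (fun x => x * log x) (Ioi 0) :=
    contDiffOn_id.mul (contDiffOn_log.mono fun _ hx => hx.out.ne')
  rw [entropy_eq_integral_mul_log_sub (fun x => hε.le.trans (hgεM x).1)
    (.of_mem_Icc ε M hmeas.aemeasurable (.of_forall hgεM))
    (integrable_mul_log_of_mem_Icc hmeas hgεM)]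
  refine integral_comp_sub_comp_integral_le isOpen_Ioi hφ isCompact_Icc (convex_Icc ε M)
    (fun x hx => hε.trans_le hx.1) hg hgεM hgL fun θ => ?_
  simpa only [deriv2_mul_log, inv_mul_eq_div] using integral_norm_mehler_sq_div_mehler_le hε
    (continuous_gradient hg) (fun x => (norm_gradient g x).trans_le (hgL x)) hg.continuous hgεM θ

lemma entropy_stdGaussian_sq_add_const_le {f : E → ℝ} {ε M L : ℝ} (hf : ContDiff ℝ 1 f)
    (hfM : ∀ x, ‖f x‖ ≤ M) (hfL : ∀ x, ‖fderiv ℝ f x‖ ≤ L) (hε : 0 < ε) :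
    entropy (stdGaussian E) (fun x => f x ^ 2 + ε) ≤
      2 * ∫ x, ‖∇ f x‖ ^ 2 ∂(stdGaussian E) := by
  have hgrad := gradient_sq_add_const (hf.differentiable one_ne_zero) ε
  have hmem (x : E) : f x ^ 2 + ε ∈ Icc ε (M ^ 2 + ε) :=
    ⟨le_add_of_nonneg_left (sq_nonneg _),
      add_le_add_left (sq_le_sq.2 ((hfM x).trans (le_abs_self M))) ε⟩
  have hbdd (x : E) : ‖fderiv ℝ (fun y => f y ^ 2 + ε) x‖ ≤ 2 * M * L := by
    have hM : 0 ≤ M := (norm_nonneg _).trans (hfM x)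
    rw [← norm_gradient, hgrad, norm_smul, norm_mul, norm_two, norm_gradient]
    gcongr
    exacts [hfM x, hfL x]
  have hint : Integrable (fun x => ‖∇ f x‖ ^ 2) (stdGaussian E) :=
    .of_bound ((continuous_gradient hf).norm.pow 2).aestronglyMeasurable (L ^ 2)
      (.of_forall fun x => by
        rw [norm_pow, norm_norm, norm_gradient]
        gcongr
        exact hfL x)
  have hfisher : ∫ x, ‖∇ (fun y => f y ^ 2 + ε) x‖ ^ 2 / (f x ^ 2 + ε) ∂(stdGaussian E) ≤
      ∫ x, 4 * ‖∇ f x‖ ^ 2 ∂(stdGaussian E) := by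
    refine integral_mono_of_nonneg (.of_forall fun x => by positivity) (hint.const_mul 4)
      (.of_forall fun x => ?_)
    dsimp only
    rw [hgrad, norm_smul, mul_pow, norm_eq_abs, sq_abs, div_le_iff₀ (by positivity)]
    nlinarith [mul_nonneg hε.le (sq_nonneg ‖∇ f x‖)]
  rw [integral_const_mul] at hfisher
  linarith [entropy_stdGaussian_le_of_mem_Icc ((hf.pow 2).add contDiff_const) hε hmem hbdd]

theorem gaussian_logSobolev_sq_general {f : E → ℝ} (hf : ContDiff ℝ 1 f)
    (hf_bdd : ∃ M, ∀ x, ‖f x‖ ≤ M) (hf_bdd' : ∃ L, ∀ x, ‖fderiv ℝ f x‖ ≤ L) :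
    ∫ x, f x ^ 2 * log (f x ^ 2 / ∫ y, f y ^ 2 ∂(stdGaussian E)) ∂(stdGaussian E) ≤
      2 * ∫ x, ‖∇ f x‖ ^ 2 ∂(stdGaussian E) := by
  obtain ⟨M, hM⟩ := hf_bdd
  obtain ⟨L, hL⟩ := hf_bdd'
  have hmem (x : E) : f x ^ 2 ∈ Icc 0 (M ^ 2) :=
    ⟨sq_nonneg _, sq_le_sq.2 ((hM x).trans (le_abs_self M))⟩
  refine le_of_tendsto
    (tendsto_entropy_add_const (hf.continuous.pow 2).aestronglyMeasurable hmem) ?_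
  filter_upwards [self_mem_nhdsWithin] with ε hε
  exact entropy_stdGaussian_sq_add_const_le hf hM hL hε

end LogSobolev

theorem gaussian_logSobolev_sq (n : ℕ) (f : EuclideanSpace ℝ (Fin n) → ℝ)
    (hf : ContDiff ℝ (⊤ : ℕ∞) f) (hfs : HasCompactSupport f) :
    ∫ x, f x ^ 2 * Real.log (f x ^ 2 / ∫ y, f y ^ 2 ∂(gaussian n)) ∂(gaussian n)
      ≤ 2 * ∫ x, ‖gradient f x‖ ^ 2 ∂(gaussian n) := by
  have hf₁ : ContDiff ℝ 1 f := hf.of_le (by exact_mod_cast le_top)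
  rw [gaussian_eq_stdGaussian]
  exact gaussian_logSobolev_sq_general hf₁ (hfs.exists_bound_of_continuous hf₁.continuous)
    ((hfs.fderiv ℝ).exists_bound_of_continuous (hf₁.continuous_fderiv one_ne_zero))
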